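/- Let h, d, m ∈ ℕ with m ≥ 2 and let G := G_{h,d,m}. For every L ∈ ℕ and every vertex x on the L-th level of the binary tree B(G), the vertex set S(Δ(x)) ∪ B_G(R(G), L) separates S(G) from T(G) in G. -/

import Mathlib

open SimpleGraph

namespace CGT

/-- Distance between two vertex sets, as an extended natural number. -/
noncomputable def sDist {V : Type*} (G : SimpleGraph V) (U U' : Set V) : ℕ∞ :=
  ⨅ (u : U) (v : U'), G.edist u.1 v.1

/-- The ball of radius `r` around a vertex set `U`. -/
def gBall {V : Type*} (G : SimpleGraph V) (U : Set V) (r : ℕ) : Set V :=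
  {v | ∃ u ∈ U, G.edist u v ≤ (r : ℕ∞)}

/-- A set of vertices is connected if the induced subgraph is connected. -/
def SetConn {V : Type*} (G : SimpleGraph V) (U : Set V) : Prop :=
  (G.induce U).Connected

/-- The vertex set of a walk. -/
def walkSupp {V : Type*} {G : SimpleGraph V} {a b : V} (p : G.Walk a b) : Set V :=
  {v | v ∈ p.support}

/-- `X` separates `Y` and `Z` in `G`: every path with one end in `Y` and one in `Z`
contains a vertex of `X`. -/
def Separates {V : Type*} (G : SimpleGraph V) (X Y Z : Set V) : Prop :=
  ∀ ⦃y z : V⦄, y ∈ Y → z ∈ Z → ∀ p : G.Walk y z, p.IsPath → ∃ x ∈ X, x ∈ p.support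

/-- `f` is an `(M,A)`-quasi-isometry from `G` to `H`.  The two-sided distance bound
`M⁻¹ d_G(u,v) - A ≤ d_H(f u, f v) ≤ M d_G(u,v) + A` is stated multiplied out over `ℕ∞`. -/
structure IsQI {V V' : Type*} (M A : ℕ) (G : SimpleGraph V) (H : SimpleGraph V')
    (f : V → V') : Prop where
  upper : ∀ u v : V, H.edist (f u) (f v) ≤ (M : ℕ∞) * G.edist u v + (A : ℕ∞)
  lower : ∀ u v : V, G.edist u v ≤ (M : ℕ∞) * H.edist (f u) (f v) + (M : ℕ∞) * (A : ℕ∞)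
  dense : ∀ w : V', ∃ v : V, H.edist w (f v) ≤ (A : ℕ∞)

/-- `G` is `(M,A)`-quasi-isometric to `H`. -/
def QIsometric {V V' : Type*} (M A : ℕ) (G : SimpleGraph V) (H : SimpleGraph V') : Prop :=
  ∃ f : V → V', IsQI M A G H f

/-- `X` is a minor of `G`. -/
def HasMinor {V W : Type*} (G : SimpleGraph V) (X : SimpleGraph W) : Prop :=
  ∃ U : W → Set V,
    (∀ x, (U x).Nonempty) ∧ (∀ x, SetConn G (U x)) ∧
    (∀ ⦃x y⦄, x ≠ y → Disjoint (U x) (U y)) ∧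
    ∀ ⦃x y⦄, X.Adj x y → ∃ u ∈ U x, ∃ v ∈ U y, G.Adj u v

/-- The `(a × b)`-grid graph. -/
def gridGraph (a b : ℕ) : SimpleGraph (Fin a × Fin b) :=
  SimpleGraph.fromRel (fun u v =>
    (u.1 = v.1 ∧ u.2.1 + 1 = v.2.1) ∨ (u.2 = v.2 ∧ u.1.1 + 1 = v.1.1))

/-- A `K`-fat model of `X` in `G`: disjoint connected branch sets joined by internally
disjoint branch paths, all pairwise at distance at least `K` except for a branch path and
the branch sets of its endpoints. -/
structure FatModel {V W : Type*} (G : SimpleGraph V) (X : SimpleGraph W) (K : ℕ) where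
  branch : W → Set V
  branch_nonempty : ∀ x, (branch x).Nonempty
  branch_connected : ∀ x, SetConn G (branch x)
  branch_disjoint : ∀ ⦃x y⦄, x ≠ y → Disjoint (branch x) (branch y)
  pathEnd : ∀ ⦃x y⦄, X.Adj x y → V
  path : ∀ ⦃x y⦄ (e : X.Adj x y), G.Walk (pathEnd e) (pathEnd e.symm)
  path_isPath : ∀ ⦃x y⦄ (e : X.Adj x y), (path e).IsPath
  path_symm : ∀ ⦃x y⦄ (e : X.Adj x y), path e.symm = (path e).reverse
  pathEnd_mem : ∀ ⦃x y⦄ (e : X.Adj x y), pathEnd e ∈ branch x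
  path_meets : ∀ ⦃x y⦄ (e : X.Adj x y) (z : W) (v : V), v ∈ (path e).support → v ∈ branch z →
    (z = x ∧ v = pathEnd e) ∨ (z = y ∧ v = pathEnd e.symm)
  path_int_disjoint : ∀ ⦃x y x' y'⦄ (e : X.Adj x y) (e' : X.Adj x' y'), s(x, y) ≠ s(x', y') →
    ∀ v, v ∈ (path e).support → v ∈ (path e').support → v = pathEnd e' ∨ v = pathEnd e'.symm
  fat_branch : ∀ ⦃x y⦄, x ≠ y → (K : ℕ∞) ≤ sDist G (branch x) (branch y)
  fat_path_branch : ∀ ⦃x y⦄ (e : X.Adj x y) (z : W), z ≠ x → z ≠ y →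
    (K : ℕ∞) ≤ sDist G (walkSupp (path e)) (branch z)
  fat_paths : ∀ ⦃x y x' y'⦄ (e : X.Adj x y) (e' : X.Adj x' y'), s(x, y) ≠ s(x', y') →
    (K : ℕ∞) ≤ sDist G (walkSupp (path e)) (walkSupp (path e'))

/-- `X` is a `K`-fat minor of `G`. -/
def IsFatMinor {V W : Type*} (G : SimpleGraph V) (X : SimpleGraph W) (K : ℕ) : Prop :=
  Nonempty (FatModel G X K)

/-- `W` is a `K`-fat `n`-path-connected set in `G`. -/
def FatPathConn {V : Type*} (G : SimpleGraph V) (K n : ℕ) (W : Set V) : Prop :=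
  (∃ S : Finset V, ↑S ⊆ W ∧ 2 * n ≤ S.card) ∧
  (∀ ⦃u v : V⦄, u ∈ W → v ∈ W → u ≠ v → (K : ℕ∞) ≤ G.edist u v) ∧
  ∀ l : ℕ, l ≤ n → ∀ A B : Finset V, ↑A ⊆ W → ↑B ⊆ W → A.card = l → B.card = l →
    ∃ (a b : Fin l → V) (P : ∀ i : Fin l, G.Walk (a i) (b i)),
      (∀ i, (P i).IsPath) ∧ (∀ i, a i ∈ A ∧ b i ∈ B) ∧
      ∀ i j, i ≠ j → (K : ℕ∞) ≤ sDist G (walkSupp (P i)) (walkSupp (P j))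

end CGT

namespace Ghdm

/-- Raw vertex codes for the graphs `G_{h,d,m}`:
`path k` is the `k`-th vertex of the base path; `tree j i p` is the vertex at position `p`
of the `i`-th binary tree at level `j` (the root being position `[]`); and
`spine j i k t e s` is the `s`-th internal vertex of the spine from the `k`-th leaf of that
tree to the `e`-th element of the `t`-th local gluing set at level `j-1`. -/
inductive Raw : Type where
  | path (k : ℕ)
  | tree (j i : ℕ) (p : List Bool)
  | spine (j i k t e s : ℕ)
deriving DecidableEq

/-- `N = 2^{h+1} - 1`, the number of copies of `G_{h,d,m-1}` glued inside `G_{h,d,m}`. -/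
def NN (h : ℕ) : ℕ := 2 ^ (h + 1) - 1

/-- Canonical representative of a raw vertex code: all tree roots are identified with the
single root `tree m 1 []`, and the leftmost leaf of tree `i > 1` is identified with the
rightmost leaf of tree `i - 1` (consecutive copies are glued along these leaves). -/
def canon (h m : ℕ) : Raw → Raw
  | .tree j i p =>
    if p = [] then .tree m 1 []
    else if p = List.replicate h false ∧ 1 < i then .tree j (i - 1) (List.replicate h true)
    else .tree j i p
  | x => x

/-- The `q`-bit binary representation of `i` (most significant bit first);
`false` means "left". -/
def natToBits (q i : ℕ) : List Bool := (List.range q).map fun a => Nat.testBit i (q - 1 - a)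

/-- Position of the `k`-th leaf (1-based, from the left) in a binary tree of height `h`. -/
def leafPos (h k : ℕ) : List Bool := natToBits h (k - 1)

/-- The `e`-th element of the `g`-th gluing set `V^{jv}_g` (at level `jv`):
its element `e = 1` is an anchor of the base path, and its element `e ≥ 2` is a shared
extreme leaf of the trees at level `e`. -/
def VsetElem (h d jv g e : ℕ) : Raw :=
  if e = 1 then .path ((g - 1) * NN h ^ (jv - 1) * (d + 1))
  else if (g - 1) * NN h ^ (jv - e) = 0 then .tree e 1 (List.replicate h false)
  else .tree e ((g - 1) * NN h ^ (jv - e)) (List.replicate h true)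

/-- Valid (canonical) vertex codes of `G_{h,d,m}`. -/
def Valid (h d m : ℕ) : Raw → Prop
  | .path k => k ≤ (d + 1) * NN h ^ (m - 1)
  | .tree j i p => 2 ≤ j ∧ j ≤ m ∧ 1 ≤ i ∧ i ≤ NN h ^ (m - j) ∧ p.length ≤ h ∧
      (p = [] → j = m ∧ i = 1) ∧ (p = List.replicate h false → p ≠ [] → i = 1)
  | .spine j i k t e s => 2 ≤ j ∧ j ≤ m ∧ 1 ≤ i ∧ i ≤ NN h ^ (m - j) ∧
      1 ≤ k ∧ k ≤ 2 ^ h ∧ (t = 2 * k - 2 ∨ t = 2 * k + 1) ∧ 1 ≤ t ∧ t ≤ 2 ^ (h + 1) ∧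
      1 ≤ e ∧ e ≤ j - 1 ∧ 1 ≤ s ∧ s ≤ d

/-- Generating adjacencies between raw vertex codes: consecutive base path vertices,
parent/child in the binary trees, consecutive spine vertices, a spine and the leaf it
starts at, a spine and the gluing-set vertex it ends at (the latter collapsed to a single
edge when `d = 0`). -/
inductive rawAdj (h d : ℕ) : Raw → Raw → Prop
  | base (k : ℕ) : rawAdj h d (.path k) (.path (k + 1))
  | child (j i : ℕ) (p : List Bool) (b : Bool) : p.length < h →
      rawAdj h d (.tree j i p) (.tree j i (p ++ [b]))
  | step (j i k t e s : ℕ) : rawAdj h d (.spine j i k t e s) (.spine j i k t e (s + 1))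
  | toLeaf (j i k t e : ℕ) : rawAdj h d (.tree j i (leafPos h k)) (.spine j i k t e 1)
  | toV (j i k t e : ℕ) :
      rawAdj h d (.spine j i k t e d) (VsetElem h d (j - 1) ((i - 1) * NN h + t) e)
  | short (j i k t e : ℕ) : d = 0 → 1 ≤ k → k ≤ 2 ^ h → (t = 2 * k - 2 ∨ t = 2 * k + 1) →
      1 ≤ t → t ≤ 2 ^ (h + 1) → 1 ≤ e → e ≤ j - 1 →
      rawAdj h d (.tree j i (leafPos h k)) (VsetElem h d (j - 1) ((i - 1) * NN h + t) e)

/-- Adjacency of canonical representatives. -/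
def rel (h d m : ℕ) (x y : Raw) : Prop :=
  ∃ a b, rawAdj h d a b ∧ x = canon h m a ∧ y = canon h m b

/-- The vertex set of `G_{h,d,m}`. -/
def Verts (h d m : ℕ) : Set Raw := {x | Valid h d m x}

/-- The graph `G_{h,d,m}`. -/
def G (h d m : ℕ) : SimpleGraph (Verts h d m) :=
  (SimpleGraph.fromRel (rel h d m)).induce (Verts h d m)

/-- Lift a set of raw codes to a set of vertices of `G_{h,d,m}`. -/
def lift {h d m : ℕ} (S : Set Raw) : Set (Verts h d m) := Subtype.val ⁻¹' S

/-- The root `R(G_{h,d,m})`. -/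
def RootR (m : ℕ) : Raw := .tree m 1 []

/-- The gluing set `V^{jv}_g` of `G_{h,d,m}`, as a set of raw codes. -/
def VsetRaw (h d m jv g : ℕ) : Set Raw :=
  {x | ∃ e, 1 ≤ e ∧ e ≤ jv ∧ x = canon h m (VsetElem h d jv g e)}

/-- The set `S(G_{h,d,m})`. -/
def SsetR (h d m : ℕ) : Set Raw :=
  VsetRaw h d m (m - 1) 1 ∪ {canon h m (.tree m 1 (leafPos h 1))}

/-- The set `T(G_{h,d,m})`. -/
def TsetR (h d m : ℕ) : Set Raw :=
  VsetRaw h d m (m - 1) (2 ^ (h + 1)) ∪ {canon h m (.tree m 1 (leafPos h (2 ^ h)))}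

/-- For a vertex of the top binary tree at position `p`, the (1-based) index of the
leftmost leaf of the top tree below it. -/
def kOf (h : ℕ) (p : List Bool) : ℕ :=
  (p.foldl (fun a b => 2 * a + if b then 1 else 0) 0) * 2 ^ (h - p.length) + 1

/-- `S(Δ(x))` for the vertex `x` of the top binary tree `B(G_{h,d,m})` at position `p`. -/
def SDeltaR (h d m : ℕ) (p : List Bool) : Set Raw :=
  VsetRaw h d m (m - 1) (2 * kOf h p - 1) ∪ {canon h m (.tree m 1 (leafPos h (kOf h p)))}

/-- The leaf of `B(G_{h,d,m})` immediately to the left of the leftmost leaf below the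
top-tree vertex at position `p`; it is the unique leaf joined by spines to `S(Δ(x))`. -/
def leafLeftR (h m : ℕ) (p : List Bool) : Raw :=
  canon h m (.tree m 1 (leafPos h (kOf h p - 1)))

end Ghdm

namespace Ghdm

/-- value of a bit list -/
def bval (p : List Bool) : ℕ := p.foldl (fun a b => 2 * a + if b then 1 else 0) 0

lemma bval_append (p : List Bool) (b : Bool) :
    bval (p ++ [b]) = 2 * bval p + if b then 1 else 0 := by
  simp [bval]

lemma bval_lt (p : List Bool) : bval p < 2 ^ p.length := by
  induction p using List.reverseRecOn with
  | nil => simp [bval]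
  | append_singleton q b ih =>
    rw [bval_append]
    simp only [List.length_append, List.length_singleton, pow_succ]
    split <;> omega

lemma natToBits_length (q i : ℕ) : (natToBits q i).length = q := by simp [natToBits]

lemma natToBits_succ (q i : ℕ) :
    natToBits (q + 1) i = natToBits q (i / 2) ++ [i.testBit 0] := by
  unfold natToBits
  rw [List.range_succ, List.map_append]
  congr 1
  · apply List.map_congr_left
    intro a ha
    have ha : a < q := List.mem_range.1 ha
    rw [Nat.testBit_div_two]
    congr 1
    omega
  · simp

lemma bval_natToBits (q i : ℕ) (hi : i < 2 ^ q) : bval (natToBits q i) = i := by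
  induction q generalizing i with
  | zero => simp at hi; subst hi; simp [natToBits, bval]
  | succ q ih =>
    rw [natToBits_succ, bval_append, ih (i / 2) (by rw [pow_succ] at hi; omega)]
    rw [Nat.testBit_zero]
    by_cases hh : i % 2 = 1 <;> simp [hh] <;> omega

lemma NN_pos (h : ℕ) : 0 < NN h := by
  unfold NN
  have : 2 ≤ 2 ^ (h + 1) := by rw [pow_succ]; have := Nat.one_le_two_pow (n := h); omega
  omega

lemma NN_succ (h : ℕ) : NN h + 1 = 2 ^ (h + 1) := by
  unfold NN
  have := Nat.one_le_two_pow (n := h + 1)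
  omega

lemma rep_ne {h : ℕ} (hh : 1 ≤ h) : List.replicate h true ≠ List.replicate h false := by
  obtain ⟨n, rfl⟩ : ∃ n, h = n + 1 := ⟨h - 1, by omega⟩
  simp [List.replicate_succ]

lemma rep_ne_nil {h : ℕ} (hh : 1 ≤ h) (b : Bool) : List.replicate h b ≠ [] := by
  simp; omega

/-- the left side of the cut -/
def LeftS (h d m c : ℕ) : Raw → Prop
  | .path q => q < 2 * c * NN h ^ (m - 2) * (d + 1)
  | .tree j i q => if j = m then bval q * 2 ^ (h - q.length) < c
      else i ≤ 2 * c * NN h ^ (m - 1 - j)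
  | .spine j i _ t _ _ => if j = m then t ≤ 2 * c + 1 else i ≤ 2 * c * NN h ^ (m - 1 - j)

/-- outside the separator -/
structure Out (h d m c L : ℕ) (x : Raw) : Prop where
  o1 : x ≠ .path (2 * c * NN h ^ (m - 2) * (d + 1))
  o2 : ∀ e, 2 ≤ e → e ≤ m - 1 →
    x ≠ .tree e (2 * c * NN h ^ (m - 1 - e)) (List.replicate h true)
  o3 : x ≠ .tree m 1 (leafPos h (c + 1))
  o4 : ∀ q : List Bool, q.length ≤ L → x ≠ .tree m 1 q

lemma canon_tree_one (h m : ℕ) (q : List Bool) : canon h m (.tree m 1 q) = .tree m 1 q := by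
  simp only [canon]
  split_ifs with h1 h2
  · rw [h1]
  · omega
  · rfl

lemma leafPos_length (h k : ℕ) : (leafPos h k).length = h := natToBits_length _ _

/-- canonicalization of a tree vertex does not change the side in lower trees, and is trivial
in the top tree -/
lemma canon_low {h d m c L j i : ℕ} {q : List Bool} (hh : 1 ≤ h) (hq : q ≠ [])
    (hj : j ≠ m)
    (hv : Valid h d m (canon h m (.tree j i q))) (ho : Out h d m c L (canon h m (.tree j i q))) :
    2 ≤ j ∧ j ≤ m - 1 ∧ 1 ≤ i ∧
    (LeftS h d m c (canon h m (.tree j i q)) ↔ i ≤ 2 * c * NN h ^ (m - 1 - j)) := by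
  have e1 : canon h m (.tree j i q) = if q = List.replicate h false ∧ 1 < i then
      .tree j (i - 1) (List.replicate h true) else .tree j i q := by
    simp [canon, hq]
  rw [e1] at hv ho ⊢
  split_ifs at hv ho ⊢ with h1
  · simp only [Valid] at hv
    have := ho.o2 j hv.1 (by omega)
    simp only [LeftS, hj, if_false]
    refine ⟨hv.1, by omega, by omega, ?_⟩
    have : i - 1 ≠ 2 * c * NN h ^ (m - 1 - j) := by
      intro hc; rw [hc] at this; exact this rfl
    omega
  · simp only [Valid] at hv
    simp only [LeftS, hj, if_false]
    refine ⟨hv.1, by omega, hv.2.2.1, ?_⟩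
    simp

lemma leafA {h d m c L j i k t : ℕ} (hh : 1 ≤ h) (hk : 1 ≤ k) (hk2 : k ≤ 2 ^ h)
    (ht : t = 2 * k - 2 ∨ t = 2 * k + 1)
    (him : j = m → i = 1)
    (hv : Valid h d m (canon h m (.tree j i (leafPos h k))))
    (ho : Out h d m c L (canon h m (.tree j i (leafPos h k)))) :
    LeftS h d m c (canon h m (.tree j i (leafPos h k))) ↔
      (if j = m then t ≤ 2 * c + 1 else i ≤ 2 * c * NN h ^ (m - 1 - j)) := by
  have hne : leafPos h k ≠ [] := by
    intro h0; have := leafPos_length h k; rw [h0] at this; simp at this; omega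
  by_cases hj : j = m
  · obtain rfl := him hj
    subst hj
    rw [canon_tree_one] at ho ⊢
    have h3 := ho.o3
    have : k ≠ c + 1 := by rintro rfl; exact h3 rfl
    have hb : bval (leafPos h k) = k - 1 := bval_natToBits h (k - 1) (by omega)
    simp only [LeftS, if_true, leafPos_length, hb, Nat.sub_self, pow_zero, mul_one]
    omega
  · rw [if_neg hj]
    exact (canon_low hh hne hj hv ho).2.2.2

lemma canon_V {h m jv g e : ℕ} (d : ℕ) (hh : 1 ≤ h) (hg : 2 ≤ g) :
    canon h m (VsetElem h d jv g e) = if e = 1 then .path ((g - 1) * NN h ^ (jv - 1) * (d + 1))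
      else .tree e ((g - 1) * NN h ^ (jv - e)) (List.replicate h true) := by
  have : (g - 1) * NN h ^ (jv - e) ≠ 0 := by
    have := NN_pos h
    have : 0 < g - 1 := by omega
    positivity
  unfold VsetElem
  rw [if_neg this]
  split_ifs
  · rfl
  · have h1 := rep_ne hh
    have h2 := rep_ne_nil hh true
    simp only [canon, h1, h2, if_false, false_and]

/-- cut comparison -/
lemma vB {h d m c L j i t e : ℕ} (hh : 1 ≤ h) (hj2 : 2 ≤ j) (hjm : j ≤ m) (hi : 1 ≤ i)
    (ht : 2 ≤ t) (ht2 : t ≤ 2 ^ (h + 1)) (he : 1 ≤ e) (he2 : e ≤ j - 1)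
    (him : j = m → i = 1)
    (ho : Out h d m c L (canon h m (VsetElem h d (j - 1) ((i - 1) * NN h + t) e))) :
    LeftS h d m c (canon h m (VsetElem h d (j - 1) ((i - 1) * NN h + t) e)) ↔
      (if j = m then t ≤ 2 * c + 1 else i ≤ 2 * c * NN h ^ (m - 1 - j)) := by
  have hN := NN_pos h
  rw [canon_V d hh (by omega)] at ho ⊢
  obtain ⟨g, hg⟩ : ∃ g, (i - 1) * NN h + t - 1 = g := ⟨_, rfl⟩
  rw [hg] at ho ⊢
  -- the common comparison, for any exponent
  have key : ∀ r : ℕ, e ≤ r + 1 → r + 1 ≤ j → 0 < NN h ^ (j - 1 - r) ∧ 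
      g * NN h ^ (j - 1 - r) ≠ 2 * c * NN h ^ (m - 1 - r) →
      (g * NN h ^ (j - 1 - r) < 2 * c * NN h ^ (m - 1 - r) ↔
      (if j = m then t ≤ 2 * c + 1 else i ≤ 2 * c * NN h ^ (m - 1 - j))) := by
    rintro r - hr ⟨hp, hne⟩
    by_cases hj : j = m
    · obtain rfl := him hj
      subst hj
      simp only [if_true]
      rw [Nat.mul_lt_mul_right hp]
      have : g ≠ 2 * c := by rintro rfl; exact hne rfl
      simp at hg
      omega
    · rw [if_neg hj]
      have e1 : NN h ^ (m - 1 - r) = NN h ^ (m - 1 - j) * NN h * NN h ^ (j - 1 - r) := by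
        rw [mul_assoc, ← pow_succ', ← pow_add]; congr 1; omega
      rw [e1] at hne ⊢
      rw [← mul_assoc, ← mul_assoc] at hne ⊢
      set C := 2 * c * NN h ^ (m - 1 - j)
      rw [Nat.mul_lt_mul_right hp]
      have hne' : g ≠ C * NN h := by rintro h0; rw [h0] at hne; exact hne rfl
      have hs := NN_succ h
      have g1 : (i - 1) * NN h ≤ g := by omega
      have g2 : g ≤ i * NN h := by
        obtain ⟨n, rfl⟩ : ∃ n, i = n + 1 := ⟨i - 1, by omega⟩
        simp only [Nat.add_sub_cancel] at hg
        rw [add_mul]; omega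
      constructor
      · intro hlt
        by_contra hcon
        have : C * NN h ≤ (i - 1) * NN h := Nat.mul_le_mul_right _ (by omega)
        omega
      · intro hle
        have : i * NN h ≤ C * NN h := Nat.mul_le_mul_right _ hle
        omega
  by_cases h1 : e = 1
  · subst h1
    simp only [if_true] at ho ⊢
    have o1 := ho.o1
    have em : m - 2 = m - 1 - 1 := by omega
    simp only [LeftS]
    rw [Nat.mul_lt_mul_right (by omega), em]
    apply key 1 (by omega) (by omega)
    refine ⟨by positivity, ?_⟩
    intro h0
    rw [em] at o1
    rw [h0] at o1
    exact o1 rfl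
  · rw [if_neg h1] at ho ⊢
    have o2 := ho.o2 e (by omega) (by omega)
    have hne : g * NN h ^ (j - 1 - e) ≠ 2 * c * NN h ^ (m - 1 - e) := by
      intro h0; rw [h0] at o2; exact o2 rfl
    have hem : e ≠ m := by omega
    simp only [LeftS, hem, if_false]
    rw [← key e (by omega) (by omega) ⟨by positivity, hne⟩]
    omega

lemma V_bound {h d m j i t e : ℕ} (hh : 1 ≤ h) (hj2 : 2 ≤ j) (hjm : j ≤ m)
    (ht : 2 ≤ t) (he : 1 ≤ e) (he2 : e ≤ j - 1)
    (hv : Valid h d m (canon h m (VsetElem h d (j - 1) ((i - 1) * NN h + t) e))) :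
    i ≤ NN h ^ (m - j) := by
  have hN := NN_pos h
  rw [canon_V d hh (by omega)] at hv
  have main : ((i - 1) * NN h + t - 1) * NN h ^ (j - 1 - e) ≤ NN h ^ (m - e) := by
    split_ifs at hv with h1
    · subst h1
      simp only [Valid] at hv
      rw [mul_comm (d + 1)] at hv
      exact Nat.le_of_mul_le_mul_right hv (by omega)
    · simp only [Valid] at hv
      exact hv.2.2.2.1
  have e1 : NN h ^ (m - e) = NN h ^ (m - j) * NN h * NN h ^ (j - 1 - e) := by
    rw [mul_assoc, ← pow_succ', ← pow_add]; congr 1; omega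
  rw [e1] at main
  have m2 := Nat.le_of_mul_le_mul_right main (by positivity)
  have m3 : (i - 1) * NN h < NN h ^ (m - j) * NN h := by omega
  have := Nat.lt_of_mul_lt_mul_right m3
  omega

lemma step_side {h d m c L a : ℕ} (hh : 1 ≤ h) (hL : L ≤ h) (hc : c = a * 2 ^ (h - L))
    {x y : Raw} (hr : rel h d m x y)
    (hx : Valid h d m x) (hy : Valid h d m y) (ox : Out h d m c L x) (oy : Out h d m c L y) :
    LeftS h d m c x ↔ LeftS h d m c y := by
  obtain ⟨u, v, huv, rfl, rfl⟩ := hr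
  cases huv with
  | base k =>
    have := ox.o1
    have := oy.o1
    simp only [canon, ne_eq, Raw.path.injEq] at *
    simp only [LeftS]
    omega
  | child j i q b hq =>
    by_cases hq0 : q = []
    · exfalso
      subst hq0
      exact ox.o4 [] (by simp) (by simp [canon])
    by_cases hj : j = m
    · subst hj
      have hi : i = 1 := by
        have : canon h j (.tree j i q) = .tree j i q := by
          simp only [canon, hq0, if_false]
          rw [if_neg]
          rintro ⟨h1, -⟩
          rw [h1] at hq
          simp at hq
        rw [this] at hx
        simp only [Valid, Nat.sub_self, pow_zero] at hx
        omega
      subst hi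
      rw [canon_tree_one] at hx ox
      rw [canon_tree_one] at hy oy
      rw [canon_tree_one, canon_tree_one]
      have hlen : L < q.length := by
        by_contra hcon
        exact ox.o4 q (by omega) rfl
      simp only [LeftS, if_true, bval_append, List.length_append, List.length_singleton]
      obtain ⟨s, hs⟩ : ∃ s, q.length = L + s := ⟨q.length - L, by omega⟩
      obtain ⟨r, hr⟩ : ∃ r, h = L + s + r + 1 := ⟨h - q.length - 1, by omega⟩
      have e1 : h - q.length = r + 1 := by omega
      have e2 : h - (q.length + 1) = r := by omega
      have e3 : h - L = s + 1 + r := by omega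
      rw [hc, e1, e2, e3, pow_add 2 (s + 1) r, pow_succ 2 s, pow_succ 2 r, mul_comm (2 ^ r) 2,
        ← mul_assoc, ← mul_assoc, Nat.mul_lt_mul_right (by positivity),
        Nat.mul_lt_mul_right (by positivity), ← mul_assoc]
      generalize a * 2 ^ s = z
      split <;> omega
    · rw [(canon_low hh hq0 hj hx ox).2.2.2, (canon_low hh (by simp) hj hy oy).2.2.2]
  | step j i k t e s => simp [canon, LeftS]
  | toLeaf j i k t e =>
    have hy' : Valid h d m (.spine j i k t e 1) := hy
    simp only [Valid] at hy'
    obtain ⟨v1, v2, v3, v4, v5, v6, v7, v8, v9, -⟩ := hy'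
    rw [leafA (t := t) hh v5 v6 v7 _ hx ox]
    · simp [canon, LeftS]
    · rintro rfl; simp at v4; omega
  | toV j i k t e =>
    have hx' : Valid h d m (.spine j i k t e d) := hx
    simp only [Valid] at hx'
    obtain ⟨v1, v2, v3, v4, v5, v6, v7, v8, v9, v10, v11, -⟩ := hx'
    rw [vB hh v1 v2 v3 (by omega) v9 v10 v11 _ oy]
    · simp [canon, LeftS]
    · rintro rfl; simp at v4; omega
  | short j i k t e hd v5 v6 v7 v8 v9 v10 v11 =>
    have hne : leafPos h k ≠ [] := by
      intro h0; have := leafPos_length h k; rw [h0] at this; simp at this; omega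
    have hji : 2 ≤ j ∧ j ≤ m ∧ 1 ≤ i := by
      have hx' := hx
      simp only [canon, hne, if_false] at hx'
      split_ifs at hx' with h1 <;> simp only [Valid] at hx' <;> omega
    have hi := V_bound hh hji.1 hji.2.1 (by omega) v10 v11 hy
    have him : j = m → i = 1 := by rintro rfl; simp at hi; omega
    rw [leafA hh v5 v6 v7 him hx ox, vB hh hji.1 hji.2.1 hji.2.2 (by omega) v9 v10 v11 him oy]

lemma valid_top {h d m : ℕ} (hm : 2 ≤ m) (q : List Bool) (hq : q.length ≤ h) :
    Valid h d m (.tree m 1 q) := by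
  simp [Valid, hq, hm]

lemma ball_top {h d m : ℕ} (hm : 2 ≤ m) (q : List Bool) (hq : q.length ≤ h) :
    (G h d m).edist ⟨.tree m 1 [], valid_top (d := d) hm [] (by simp)⟩ ⟨.tree m 1 q, valid_top (d := d) hm q hq⟩
      ≤ (q.length : ℕ∞) := by
  induction q using List.reverseRecOn with
  | nil => simp
  | append_singleton q b ih =>
    have hq' : q.length < h := by simp at hq; omega
    have hadj : (G h d m).Adj ⟨.tree m 1 q, valid_top (d := d) hm q hq'.le⟩
        ⟨.tree m 1 (q ++ [b]), valid_top (d := d) hm _ hq⟩ := by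
      simp only [G, SimpleGraph.comap_adj, SimpleGraph.fromRel_adj, Function.Embedding.subtype_apply]
      refine ⟨by simp, Or.inl ⟨_, _, rawAdj.child m 1 q b hq', ?_, ?_⟩⟩
      · rw [canon_tree_one]
      · rw [canon_tree_one]
    refine (SimpleGraph.edist_triangle (v := ⟨.tree m 1 q, valid_top (d := d) hm q hq'.le⟩)).trans ?_
    rw [SimpleGraph.edist_eq_one_iff_adj.2 hadj]
    simp only [List.length_append, List.length_singleton, Nat.cast_add, Nat.cast_one]
    gcongr
    exact ih hq'.le

lemma walk_side {V : Type*} {Γ : SimpleGraph V} (X : Set V) (P : V → Prop)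
    (hstep : ∀ u v, Γ.Adj u v → u ∉ X → v ∉ X → (P u ↔ P v)) {u v : V} (w : Γ.Walk u v)
    (hw : ∀ x ∈ w.support, x ∉ X) : P u ↔ P v := by
  induction w with
  | nil => rfl
  | cons hadj w ih =>
    rw [← ih (fun x hx => hw x (by simp [hx]))]
    exact hstep _ _ hadj (hw _ (by simp)) (hw _ (by simp))

end Ghdm

/-- for every vertex `x` (at position `p`) on the `L`-th level of the binary
tree `B(G_{h,d,m})`, the set `S(Δ(x)) ∪ B_G(R(G), L)` separates `S(G)` from `T(G)`. -/
theorem statement5 (h d m : ℕ) (hm : 2 ≤ m) (L : ℕ) (hL : L ≤ h)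
    (p : List Bool) (hp : p.length = L) :
    CGT.Separates (Ghdm.G h d m)
      (Ghdm.lift (Ghdm.SDeltaR h d m p) ∪
        CGT.gBall (Ghdm.G h d m) (Ghdm.lift {Ghdm.RootR m}) L)
      (Ghdm.lift (Ghdm.SsetR h d m)) (Ghdm.lift (Ghdm.TsetR h d m)) := by
  intro y z hy hz w _
  by_contra hcon
  push Not at hcon
  set c := Ghdm.bval p * 2 ^ (h - L) with hc
  have hk : Ghdm.kOf h p = c + 1 := by rw [hc, ← hp]; rfl
  have hval : Ghdm.bval p < 2 ^ L := hp ▸ Ghdm.bval_lt p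
  have hc2 : c + 1 ≤ 2 ^ h := by
    have e1 : 2 ^ h = 2 ^ L * 2 ^ (h - L) := by rw [← pow_add]; congr 1; omega
    have e2 : c < 2 ^ L * 2 ^ (h - L) := Nat.mul_lt_mul_of_pos_right hval (by positivity)
    omega
  have hkK : 2 * (c + 1) - 1 = 2 * c + 1 := by omega
  -- trivial case
  rcases Nat.eq_zero_or_pos c with h0 | hcpos
  · refine hcon y ?_ w.start_mem_support
    left
    have : Ghdm.SDeltaR h d m p = Ghdm.SsetR h d m := by
      unfold Ghdm.SDeltaR Ghdm.SsetR; rw [hk, h0]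
    show y.1 ∈ Ghdm.SDeltaR h d m p
    rw [this]; exact hy
  have hh : 1 ≤ h := by
    by_contra h1
    have : h = 0 := by omega
    subst this
    simp at hc2; omega
  have hN := Ghdm.NN_pos h
  have hs := Ghdm.NN_succ h
  have hout : ∀ v : Ghdm.Verts h d m, v ∉ (Ghdm.lift (Ghdm.SDeltaR h d m p) ∪
      CGT.gBall (Ghdm.G h d m) (Ghdm.lift {Ghdm.RootR m}) L : Set (Ghdm.Verts h d m)) → Ghdm.Out h d m c L v.1 := by
    rintro ⟨v, hv⟩ hvX
    have hv1 : v ∉ Ghdm.SDeltaR h d m p := fun h1 => hvX (Or.inl h1)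
    have hv2 : (⟨v, hv⟩ : Ghdm.Verts h d m) ∉ CGT.gBall (Ghdm.G h d m) (Ghdm.lift {Ghdm.RootR m}) L :=
      fun h1 => hvX (Or.inr h1)
    have hm2 : m - 2 = m - 1 - 1 := by omega
    constructor
    · rintro rfl
      apply hv1
      left
      refine ⟨1, le_rfl, by omega, ?_⟩
      rw [hk, Ghdm.canon_V d hh (by omega), hkK, hm2]
      simp
    · rintro e he1 he2 rfl
      apply hv1
      left
      refine ⟨e, by omega, by omega, ?_⟩
      rw [hk, Ghdm.canon_V d hh (by omega), hkK, if_neg (by omega)]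
      simp
    · rintro rfl
      apply hv1
      right
      rw [hk, Ghdm.canon_tree_one]
      rfl
    · rintro q hq rfl
      apply hv2
      refine ⟨⟨.tree m 1 [], Ghdm.valid_top (d := d) hm [] (by simp)⟩, rfl, ?_⟩
      refine (Ghdm.ball_top hm q (by omega)).trans ?_
      exact_mod_cast hq
  have hside := Ghdm.walk_side (Γ := Ghdm.G h d m) (Ghdm.lift (Ghdm.SDeltaR h d m p) ∪
      CGT.gBall (Ghdm.G h d m) (Ghdm.lift {Ghdm.RootR m}) L) (fun v => Ghdm.LeftS h d m c v.1) (by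
    intro u v huv hu hv
    have hu' := hout u hu
    have hv' := hout v hv
    simp only [Ghdm.G, SimpleGraph.comap_adj, SimpleGraph.fromRel_adj,
      Function.Embedding.subtype_apply] at huv
    rcases huv.2 with hr | hr
    · exact Ghdm.step_side hh hL hc hr u.2 v.2 hu' hv'
    · exact (Ghdm.step_side hh hL hc hr v.2 u.2 hv' hu').symm) w
    (fun x hx hxX => hcon x hxX hx)
  have hyL : Ghdm.LeftS h d m c y.1 := by
    rcases hy with ⟨e, he1, he2, he⟩ | hy
    · rw [he]
      unfold Ghdm.VsetElem
      by_cases h1 : e = 1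
      · simp only [h1, if_true, Ghdm.canon, Ghdm.LeftS, Nat.sub_self, zero_mul]
        positivity
      · have hem : e ≠ m := by omega
        simp only [h1, if_false, if_true, Nat.sub_self, zero_mul, Ghdm.canon, Ghdm.rep_ne_nil hh,
          lt_irrefl, and_false, Ghdm.LeftS, hem]
        have : 0 < 2 * c * Ghdm.NN h ^ (m - 1 - e) := by positivity
        omega
    · have hy' : y.1 = Ghdm.canon h m (.tree m 1 (Ghdm.leafPos h 1)) := hy
      rw [hy', Ghdm.canon_tree_one]
      have hb : Ghdm.bval (Ghdm.leafPos h 1) = 0 := Ghdm.bval_natToBits h 0 (by positivity)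
      simp only [Ghdm.LeftS, if_true, hb, zero_mul]
      exact hcpos
  have hzR : ¬ Ghdm.LeftS h d m c z.1 := by
    have hpow : 2 ^ (h + 1) = 2 * 2 ^ h := by rw [pow_succ]; ring
    have hlt : 2 * c < 2 ^ (h + 1) - 1 := by omega
    rcases hz with ⟨e, he1, he2, he⟩ | hz
    · rw [he, Ghdm.canon_V d hh (by omega)]
      by_cases h1 : e = 1
      · have hm2 : m - 2 = m - 1 - 1 := by omega
        simp only [h1, if_true, Ghdm.LeftS, hm2, not_lt]
        gcongr
      · have hem : e ≠ m := by omega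
        simp only [h1, if_false, Ghdm.LeftS, hem, not_le]
        exact Nat.mul_lt_mul_of_pos_right hlt (by positivity)
    · have hz' : z.1 = Ghdm.canon h m (.tree m 1 (Ghdm.leafPos h (2 ^ h))) := hz
      rw [hz', Ghdm.canon_tree_one]
      have hb : Ghdm.bval (Ghdm.leafPos h (2 ^ h)) = 2 ^ h - 1 :=
        Ghdm.bval_natToBits h (2 ^ h - 1) (by omega)
      simp only [Ghdm.LeftS, if_true, hb, Ghdm.leafPos_length, Nat.sub_self, pow_zero, mul_one]
      omega
  exact hzR (hside.1 hyL)
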